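/- Assume 0 < η_i < 1/‖A_i‖² for i = 1, …, p and let x† denote the x₀-minimal norm solution of A x = y. Suppose that for each δ > 0 a stopping index n_δ is chosen such that n_δ → ∞ and δ² n_δ → 0 as δ → 0. Then, for any family of noisy data y^δ with ‖y_i^δ − y_i‖ ≤ δ_i and δ = (δ_1² + ⋯ + δ_p²)^{1/2}, the stochastic heavy ball iterates satisfy E[‖x_{n_δ}^δ − x†‖²] → 0 as δ → 0. -/

import Mathlib

open Filter Topology

/-- Expectation with respect to the first `m` i.i.d. uniformly distributed indices:
for a quantity `f` determined by the coordinates `i_0, …, i_{m-1}` of the sample path,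
`avg p hp m f = p^{-m} ∑_{(i_0,…,i_{m-1}) ∈ {1,…,p}^m} f`. -/
noncomputable def avg (p : ℕ) (hp : 0 < p) (m : ℕ) (f : (ℕ → Fin p) → ℝ) : ℝ :=
  (∑ σ : Fin m → Fin p, f (fun k => if h : k < m then σ ⟨k, h⟩ else ⟨0, hp⟩)) / (p : ℝ) ^ m

section Averages

variable {p : ℕ} {hp : 0 < p} {m : ℕ}

theorem avg_zero (f : (ℕ → Fin p) → ℝ) : avg p hp 0 f = f (fun _ => ⟨0, hp⟩) := by
  simp [avg]

theorem avg_add (f g : (ℕ → Fin p) → ℝ) :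
    avg p hp m (fun ω => f ω + g ω) = avg p hp m f + avg p hp m g := by
  simp [avg, Finset.sum_add_distrib, add_div]

theorem avg_const_mul (c : ℝ) (f : (ℕ → Fin p) → ℝ) :
    avg p hp m (fun ω => c * f ω) = c * avg p hp m f := by
  simp [avg, ← Finset.mul_sum, mul_div_assoc]

theorem avg_const (c : ℝ) : avg p hp m (fun _ => c) = c := by
  have : (p : ℝ) ≠ 0 := by positivity
  simp [avg, this]

theorem avg_sum {ι : Type*} (s : Finset ι) (f : ι → (ℕ → Fin p) → ℝ) :
    avg p hp m (fun ω => ∑ k ∈ s, f k ω) = ∑ k ∈ s, avg p hp m (f k) := by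
  simp only [avg]
  rw [Finset.sum_comm, Finset.sum_div]

theorem avg_mono {f g : (ℕ → Fin p) → ℝ} (h : ∀ ω, f ω ≤ g ω) :
    avg p hp m f ≤ avg p hp m g := by
  unfold avg
  gcongr
  exact h _

theorem avg_nonneg {f : (ℕ → Fin p) → ℝ} (h : ∀ ω, 0 ≤ f ω) : 0 ≤ avg p hp m f := by
  unfold avg
  exact div_nonneg (Finset.sum_nonneg fun _ _ => h _) (by positivity)

/-- Conditioning on the first `m` indices. -/
theorem avg_succ (f : (ℕ → Fin p) → ℝ) :
    avg p hp (m + 1) f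
      = avg p hp m (fun ω => (∑ i, f (Function.update ω m i)) / (p : ℝ)) := by
  unfold avg
  rw [← Finset.sum_div, div_div, pow_succ']
  congr 1
  rw [← (Fin.snocEquiv (fun _ : Fin (m + 1) => Fin p)).sum_comp, Fintype.sum_prod_type,
    Finset.sum_comm]
  refine Finset.sum_congr rfl fun σ _ => Finset.sum_congr rfl fun i _ => ?_
  congr 1
  funext k
  rcases lt_trichotomy k m with h | h | h
  · have h' : k < m + 1 := by omega
    simp only [h', h, dite_true, Fin.snocEquiv, Equiv.coe_fn_mk, Function.update_of_ne h.ne]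
    exact Fin.snoc_castSucc (α := fun _ => Fin p) i σ ⟨k, h⟩
  · subst h
    simp only [Nat.lt_succ_self, dite_true, Fin.snocEquiv, Equiv.coe_fn_mk, Function.update_self]
    exact Fin.snoc_last (α := fun _ => Fin p) i σ
  · have h1 : ¬ k < m + 1 := by omega
    have h2 : ¬ k < m := by omega
    simp [h1, h2, Function.update_of_ne h.ne']

/-- A quantity determined by the first `m` indices has the same expectation at all later times. -/
theorem avg_eq_of_dependsOn {f : (ℕ → Fin p) → ℝ} (hf : DependsOn f (Set.Iio m)) {n : ℕ}
    (hmn : m ≤ n) : avg p hp n f = avg p hp m f := by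
  induction n, hmn using Nat.le_induction with
  | base => rfl
  | succ n hmn ih =>
    rw [avg_succ, ← ih]
    congr 1
    funext ω
    have (i : Fin p) : f (Function.update ω n i) = f ω :=
      hf fun k (hk : k < m) => Function.update_of_ne (by omega) _ _
    have hp' : (p : ℝ) ≠ 0 := by positivity
    simp [this, hp']

end Averages

section HeavyBall

variable {p : ℕ} {X : Type*} [NormedAddCommGroup X] [InnerProductSpace ℝ X] [CompleteSpace X]
  {Y : Fin p → Type*} [∀ i, NormedAddCommGroup (Y i)] [∀ i, InnerProductSpace ℝ (Y i)]
  [∀ i, CompleteSpace (Y i)]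

/-- The gradient of half the squared residual of the `i`-th equation. -/
noncomputable def residualGradient (B : ∀ i, X →L[ℝ] Y i) (ξ : ∀ i, Y i) (e : X)
    (i : Fin p) : X :=
  (B i).adjoint (B i e - ξ i)

/-- The heavy ball iteration written as an averaged iteration: the first component is the iterate,
the second the auxiliary sequence whose running means are the iterates. -/
noncomputable def heavyBall (B : ∀ i, X →L[ℝ] Y i) (ξ : ∀ i, Y i) (e₀ : X) (ω : ℕ → Fin p) :
    ℕ → X × X
  | 0 => (e₀, e₀)
  | n + 1 =>
    let e := (heavyBall B ξ e₀ ω n).1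
    let w := (heavyBall B ξ e₀ ω n).2 - residualGradient B ξ e (ω n)
    ((((n : ℝ) + 1) / ((n : ℝ) + 2)) • e + (1 / ((n : ℝ) + 2)) • w, w)

/-- The squared residual, summed over all equations. -/
noncomputable def residualSq (B : ∀ i, X →L[ℝ] Y i) (ξ : ∀ i, Y i) (e : X) : ℝ :=
  ∑ i, ‖B i e - ξ i‖ ^ 2

variable (B : ∀ i, X →L[ℝ] Y i) (ξ : ∀ i, Y i) (e₀ : X)

omit [CompleteSpace X] [∀ i, CompleteSpace (Y i)] in
theorem residual_nonneg (e : X) : 0 ≤ residualSq B ξ e :=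
  Finset.sum_nonneg fun _ _ => by positivity

omit [CompleteSpace X] [∀ i, CompleteSpace (Y i)] in
theorem norm_le_sqrt_residualSq (e : X) (i : Fin p) : ‖B i e‖ ≤ √(residualSq B 0 e) := by
  refine Real.le_sqrt_of_sq_le ?_
  have := Finset.single_le_sum (f := fun i => ‖B i e - (0 : ∀ i, Y i) i‖ ^ 2)
    (fun _ _ => by positivity) (Finset.mem_univ i)
  simpa [residualSq] using this

theorem heavyBall_dependsOn (n : ℕ) :
    DependsOn (fun ω => heavyBall B ξ e₀ ω n) (Set.Iio n) := by
  induction n with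
  | zero => intro ω ω' _; rfl
  | succ n ih =>
    intro ω ω' h
    have h1 : heavyBall B ξ e₀ ω n = heavyBall B ξ e₀ ω' n :=
      ih fun k (hk : k < n) => h k (Nat.lt_succ_of_lt hk)
    have h2 : ω n = ω' n := h n (Nat.lt_succ_self n)
    simp only [heavyBall, h1, h2]

theorem heavyBall_update_of_le (ω : ℕ → Fin p) {k n : ℕ} (hk : k ≤ n) (i : Fin p) :
    heavyBall B ξ e₀ (Function.update ω n i) k = heavyBall B ξ e₀ ω k :=
  heavyBall_dependsOn B ξ e₀ k fun j (hj : j < k) => Function.update_of_ne (by omega) _ _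

theorem heavyBall_snd_eq (ω : ℕ → Fin p) (n : ℕ) :
    (heavyBall B ξ e₀ ω n).2 = (heavyBall B ξ e₀ ω n).1
      + (n : ℝ) • ((heavyBall B ξ e₀ ω n).1 - (heavyBall B ξ e₀ ω (n - 1)).1) := by
  cases n with
  | zero => simp [heavyBall]
  | succ n =>
    have h : (n : ℝ) + 2 ≠ 0 := by positivity
    simp only [heavyBall, Nat.add_sub_cancel]
    push_cast
    match_scalars <;> field_simp <;> ring

theorem heavyBall_add (r s : X) (ω : ℕ → Fin p) (n : ℕ) :
    heavyBall B ξ (r + s) ω n = heavyBall B 0 r ω n + heavyBall B ξ s ω n := by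
  induction n with
  | zero => rfl
  | succ n ih =>
    have hw : ∀ i, (heavyBall B ξ (r + s) ω n).2
        - residualGradient B ξ (heavyBall B ξ (r + s) ω n).1 i
        = ((heavyBall B 0 r ω n).2 - residualGradient B 0 (heavyBall B 0 r ω n).1 i)
          + ((heavyBall B ξ s ω n).2 - residualGradient B ξ (heavyBall B ξ s ω n).1 i) := by
      intro i
      simp only [residualGradient, ih, Prod.fst_add, Prod.snd_add, map_add, map_sub,
        Pi.zero_apply, map_zero]
      abel
    ext
    · simp only [heavyBall, hw, Prod.fst_add]
      rw [ih]
      simp only [Prod.fst_add]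
      module
    · simp only [heavyBall, hw, Prod.snd_add]

/-- The energy that decreases in expectation along the noise-free iteration. -/
noncomputable def energy (ω : ℕ → Fin p) (n : ℕ) : ℝ :=
  ‖(heavyBall B ξ e₀ ω n).2‖ ^ 2
    + (n : ℝ) / p * residualSq B ξ (heavyBall B ξ e₀ ω (n - 1)).1

/-- One step of the iteration for a single equation. -/
theorem norm_sub_adjoint_sq_le {Z : Type*} [NormedAddCommGroup Z] [InnerProductSpace ℝ Z]
    [CompleteSpace Z] (T : X →L[ℝ] Z) {κ : ℝ} (hκ : 0 < κ) (hT : ‖T‖ ^ 2 ≤ 1 - 2 * κ)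
    (ζ : Z) (e e' : X) {a : ℝ} (ha : 0 ≤ a) :
    ‖e + a • (e - e') - T.adjoint (T e - ζ)‖ ^ 2 + (a + 1) * ‖T e - ζ‖ ^ 2
        + κ * ‖T e - ζ‖ ^ 2
      ≤ ‖e + a • (e - e')‖ ^ 2 + a * ‖T e' - ζ‖ ^ 2 + κ⁻¹ * ‖ζ‖ ^ 2 := by
  set w := e + a • (e - e') with hw
  set r := T e - ζ with hr
  set r' := T e' - ζ with hr'
  have hTw : T w = r + ζ + a • (r - r') := by
    simp only [hw, hr, hr', map_add, map_smul, map_sub]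
    module
  clear_value w r r'
  have h1 : ‖w - T.adjoint r‖ ^ 2
      = ‖w‖ ^ 2 - 2 * inner ℝ (T w) r + ‖T.adjoint r‖ ^ 2 := by
    rw [norm_sub_sq_real, ContinuousLinearMap.adjoint_inner_right]
  have h2 : ‖T.adjoint r‖ ^ 2 ≤ (1 - 2 * κ) * ‖r‖ ^ 2 := by
    have := T.adjoint.le_opNorm r
    rw [LinearIsometryEquiv.norm_map] at this
    calc ‖T.adjoint r‖ ^ 2 ≤ (‖T‖ * ‖r‖) ^ 2 := by gcongr
      _ = ‖T‖ ^ 2 * ‖r‖ ^ 2 := by ring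
      _ ≤ _ := by gcongr
  have h3 : inner ℝ (T w) r
      = ‖r‖ ^ 2 + inner ℝ ζ r + a * (‖r‖ ^ 2 - inner ℝ r' r) := by
    rw [hTw, inner_add_left, inner_add_left, inner_smul_left, inner_sub_left,
      real_inner_self_eq_norm_sq]
    simp
  have h4 : 2 * inner ℝ r' r ≤ ‖r‖ ^ 2 + ‖r'‖ ^ 2 := by
    have := norm_sub_sq_real r' r
    nlinarith [sq_nonneg ‖r' - r‖]
  have h5 : -(2 * inner ℝ ζ r) ≤ κ * ‖r‖ ^ 2 + κ⁻¹ * ‖ζ‖ ^ 2 := by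
    have h := norm_add_sq_real (κ • r) ζ
    rw [inner_smul_left, norm_smul, Real.norm_of_nonneg hκ.le, real_inner_comm] at h
    have h0 : 0 ≤ κ⁻¹ * ((κ * ‖r‖) ^ 2 + 2 * (κ * inner ℝ ζ r) + ‖ζ‖ ^ 2) := by
      have : (κ * ‖r‖) ^ 2 + 2 * (κ * inner ℝ ζ r) + ‖ζ‖ ^ 2 = ‖κ • r + ζ‖ ^ 2 := by
        rw [h]; simp
      rw [this]; positivity
    have h6 : κ⁻¹ * ((κ * ‖r‖) ^ 2 + 2 * (κ * inner ℝ ζ r) + ‖ζ‖ ^ 2)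
        = κ * ‖r‖ ^ 2 + 2 * inner ℝ ζ r + κ⁻¹ * ‖ζ‖ ^ 2 := by
      field_simp
    linarith
  have h7 := mul_le_mul_of_nonneg_left h4 ha
  rw [h1, h3]
  nlinarith

variable {B} {κ : ℝ} (hκ : 0 < κ) (hB : ∀ i, ‖B i‖ ^ 2 ≤ 1 - 2 * κ) (hp : 0 < p)
include hκ hB

theorem avg_energy_succ_le (n : ℕ) :
    avg p hp (n + 1) (fun ω => energy B ξ e₀ ω (n + 1))
        + κ / p * avg p hp n (fun ω => residualSq B ξ (heavyBall B ξ e₀ ω n).1)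
      ≤ avg p hp n (fun ω => energy B ξ e₀ ω n) + κ⁻¹ / p * ∑ i, ‖ξ i‖ ^ 2 := by
  have hp' : (0 : ℝ) < p := by positivity
  rw [avg_succ, ← avg_const_mul, ← avg_add,
    ← avg_const (hp := hp) (m := n) (κ⁻¹ / p * ∑ i, ‖ξ i‖ ^ 2), ← avg_add]
  refine avg_mono fun ω => ?_
  set e := (heavyBall B ξ e₀ ω n).1 with he
  set e' := (heavyBall B ξ e₀ ω (n - 1)).1 with he'
  have hw : (heavyBall B ξ e₀ ω n).2 = e + (n : ℝ) • (e - e') := heavyBall_snd_eq B ξ e₀ ω n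
  have hsucc : ∀ i, energy B ξ e₀ (Function.update ω n i) (n + 1)
      = ‖e + (n : ℝ) • (e - e') - residualGradient B ξ e i‖ ^ 2
        + ((n : ℝ) + 1) / p * residualSq B ξ e := by
    intro i
    simp only [energy, Nat.add_sub_cancel, heavyBall, heavyBall_update_of_le B ξ e₀ ω le_rfl,
      Function.update_self, hw, ← he]
    push_cast
    rfl
  have hsum := Finset.sum_le_sum fun i (_ : i ∈ Finset.univ) =>
    norm_sub_adjoint_sq_le (B i) hκ (hB i) (ξ i) e e' (Nat.cast_nonneg n)
  simp only [Finset.sum_add_distrib, ← Finset.mul_sum, Finset.sum_const, Finset.card_univ,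
    Fintype.card_fin, nsmul_eq_mul] at hsum
  simp only [hsucc]
  simp only [energy, hw, ← he', Finset.sum_add_distrib, Finset.sum_const, Finset.card_univ,
    Fintype.card_fin, nsmul_eq_mul]
  simp only [residualSq, residualGradient]
  have hdiv := div_le_div_of_nonneg_right hsum hp'.le
  refine le_of_eq_of_le ?_ (hdiv.trans_eq ?_) <;> field_simp

theorem avg_energy_add_sum_le (n : ℕ) :
    avg p hp n (fun ω => energy B ξ e₀ ω n)
        + κ / p * ∑ k ∈ Finset.range n,
            avg p hp k (fun ω => residualSq B ξ (heavyBall B ξ e₀ ω k).1)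
      ≤ ‖e₀‖ ^ 2 + n * (κ⁻¹ / p * ∑ i, ‖ξ i‖ ^ 2) := by
  induction n with
  | zero => simp [avg_zero, energy, heavyBall]
  | succ n ih =>
    have := avg_energy_succ_le ξ e₀ hκ hB hp n
    rw [Finset.sum_range_succ]
    push_cast
    linarith

theorem avg_energy_le (n : ℕ) :
    avg p hp n (fun ω => energy B ξ e₀ ω n)
      ≤ ‖e₀‖ ^ 2 + n * (κ⁻¹ / p * ∑ i, ‖ξ i‖ ^ 2) := by
  refine le_trans (le_add_of_nonneg_right ?_) (avg_energy_add_sum_le ξ e₀ hκ hB hp n)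
  exact mul_nonneg (by positivity)
    (Finset.sum_nonneg fun k _ => avg_nonneg fun ω => residual_nonneg _ _ _)

/-- Mean square stability with respect to the initial error and the noise. -/
theorem avg_norm_sq_le (n : ℕ) :
    avg p hp n (fun ω => ‖(heavyBall B ξ e₀ ω n).1‖ ^ 2)
      ≤ ‖e₀‖ ^ 2 + n * (κ⁻¹ / p * ∑ i, ‖ξ i‖ ^ 2) := by
  set K := κ⁻¹ / p * ∑ i, ‖ξ i‖ ^ 2 with hK
  have hK0 : 0 ≤ K := by positivity
  induction n with
  | zero => simp [avg_zero, heavyBall]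
  | succ n ih =>
    have hn : (0 : ℝ) < (n : ℝ) + 2 := by positivity
    have hpt : ∀ ω, ‖(heavyBall B ξ e₀ ω (n + 1)).1‖ ^ 2
        ≤ (((n : ℝ) + 1) / ((n : ℝ) + 2)) * ‖(heavyBall B ξ e₀ ω n).1‖ ^ 2
          + (1 / ((n : ℝ) + 2)) * energy B ξ e₀ ω (n + 1) := by
      intro ω
      have hsq : ConvexOn ℝ Set.univ ((norm : X → ℝ) ^ 2) :=
        convexOn_univ_norm.pow (fun _ _ => norm_nonneg _) 2
      obtain ⟨-, hsq⟩ := hsq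
      have hconv := hsq (Set.mem_univ (heavyBall B ξ e₀ ω n).1)
        (Set.mem_univ (heavyBall B ξ e₀ ω (n + 1)).2)
        (a := ((n : ℝ) + 1) / ((n : ℝ) + 2)) (b := 1 / ((n : ℝ) + 2))
        (by positivity) (by positivity) (by field_simp; ring)
      have hE : ‖(heavyBall B ξ e₀ ω (n + 1)).2‖ ^ 2 ≤ energy B ξ e₀ ω (n + 1) :=
        le_add_of_nonneg_right (mul_nonneg (by positivity) (residual_nonneg _ _ _))
      have hE' := mul_le_mul_of_nonneg_left hE (by positivity : (0 : ℝ) ≤ 1 / ((n : ℝ) + 2))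
      exact hconv.trans (add_le_add_right hE' _)
    have h1 := avg_mono (hp := hp) (m := n + 1) hpt
    rw [avg_add, avg_const_mul, avg_const_mul,
      avg_eq_of_dependsOn (f := fun ω => ‖(heavyBall B ξ e₀ ω n).1‖ ^ 2) (m := n)
        (fun ω ω' h => by
        simp only [heavyBall_dependsOn B ξ e₀ n h]) n.le_succ] at h1
    have h2 := avg_energy_le ξ e₀ hκ hB hp (n + 1)
    rw [← hK] at h2
    push_cast at h2 ⊢
    have h3 : avg p hp n (fun ω => ‖(heavyBall B ξ e₀ ω n).1‖ ^ 2)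
        ≤ ‖e₀‖ ^ 2 + ((n : ℝ) + 1) * K := by linarith
    calc _ ≤ _ := h1
      _ ≤ (((n : ℝ) + 1) / ((n : ℝ) + 2)) * (‖e₀‖ ^ 2 + ((n : ℝ) + 1) * K)
          + (1 / ((n : ℝ) + 2)) * (‖e₀‖ ^ 2 + ((n : ℝ) + 1) * K) := by gcongr
      _ = _ := by field_simp; ring

omit hκ hB

/-- Along the noise-free iteration, the dual norm with respect to the residual seminorm grows at
most by the sum of the residuals. -/
theorem abs_inner_heavyBall_le {R₀ : ℝ}
    (hR : ∀ h, |inner ℝ e₀ h| ≤ R₀ * √(residualSq B 0 h)) (ω : ℕ → Fin p) (n : ℕ) (h : X) :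
    |inner ℝ (heavyBall B 0 e₀ ω n).1 h|
        ≤ (R₀ + ∑ k ∈ Finset.range n, √(residualSq B 0 (heavyBall B 0 e₀ ω k).1))
          * √(residualSq B 0 h) ∧
      |inner ℝ (heavyBall B 0 e₀ ω n).2 h|
        ≤ (R₀ + ∑ k ∈ Finset.range n, √(residualSq B 0 (heavyBall B 0 e₀ ω k).1))
          * √(residualSq B 0 h) := by
  induction n with
  | zero => simpa [heavyBall] using hR h
  | succ n ih =>
    set e := (heavyBall B 0 e₀ ω n).1 with he
    set w := (heavyBall B 0 e₀ ω n).2 with hw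
    set R := R₀ + ∑ k ∈ Finset.range n, √(residualSq B 0 (heavyBall B 0 e₀ ω k).1) with hRdef
    have hw' : (heavyBall B 0 e₀ ω (n + 1)).2 = w - (B (ω n)).adjoint (B (ω n) e) := by
      simp [heavyBall, residualGradient, ← he, ← hw]
    have he' : (heavyBall B 0 e₀ ω (n + 1)).1 = (((n : ℝ) + 1) / ((n : ℝ) + 2)) • e
        + (1 / ((n : ℝ) + 2)) • (heavyBall B 0 e₀ ω (n + 1)).2 := by
      simp [heavyBall, ← he]
    have hstep : |inner ℝ (heavyBall B 0 e₀ ω (n + 1)).2 h|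
        ≤ (R + √(residualSq B 0 e)) * √(residualSq B 0 h) := by
      rw [hw', inner_sub_left, ContinuousLinearMap.adjoint_inner_left, add_mul]
      refine (abs_sub _ _).trans (add_le_add ih.2 ((abs_real_inner_le_norm _ _).trans ?_))
      gcongr <;> exact norm_le_sqrt_residualSq _ _ _
    rw [Finset.sum_range_succ, ← add_assoc, ← hRdef, ← he]
    refine ⟨?_, hstep⟩
    have ih1 : |inner ℝ e h| ≤ (R + √(residualSq B 0 e)) * √(residualSq B 0 h) :=
      ih.1.trans (by gcongr; exact le_add_of_nonneg_right (Real.sqrt_nonneg _))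
    have hn : (0 : ℝ) < (n : ℝ) + 2 := by positivity
    rw [he', inner_add_left, inner_smul_left, inner_smul_left]
    refine (abs_add_le _ _).trans ?_
    simp only [abs_mul, conj_trivial]
    rw [abs_of_nonneg (by positivity : 0 ≤ ((n : ℝ) + 1) / ((n : ℝ) + 2)),
      abs_of_nonneg (by positivity : 0 ≤ 1 / ((n : ℝ) + 2))]
    set M := (R + √(residualSq B 0 e)) * √(residualSq B 0 h)
    calc _ ≤ ((n : ℝ) + 1) / ((n : ℝ) + 2) * M + 1 / ((n : ℝ) + 2) * M := by gcongr
      _ = M := by field_simp; ring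

include hκ hB

/-- Mean square convergence of the noise-free iteration under a source condition. -/
theorem tendsto_avg_norm_sq {R₀ : ℝ}
    (hR : ∀ h, |inner ℝ e₀ h| ≤ R₀ * √(residualSq B 0 h)) :
    Tendsto (fun n => avg p hp n (fun ω => ‖(heavyBall B 0 e₀ ω n).1‖ ^ 2)) atTop (𝓝 0) := by
  have hp' : (0 : ℝ) < p := by positivity
  set q : ℕ → (ℕ → Fin p) → ℝ := fun k ω => residualSq B 0 (heavyBall B 0 e₀ ω k).1 with hq
  have hq0 : ∀ k ω, 0 ≤ q k ω := fun k ω => residual_nonneg _ _ _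
  have hqdep : ∀ k, DependsOn (q k) (Set.Iio k) := fun k ω ω' h => by
    simp only [hq, heavyBall_dependsOn B 0 e₀ k h]
  set a : ℕ → ℝ := fun k => avg p hp k (q k) with ha
  have ha0 : ∀ k, 0 ≤ a k := fun k => avg_nonneg (hq0 k)
  have hsummable : Summable a := by
    refine summable_of_sum_range_le (c := ‖e₀‖ ^ 2 / (κ / p)) ha0 fun n => ?_
    rw [le_div_iff₀' (by positivity)]
    have h := avg_energy_add_sum_le (B := B) 0 e₀ hκ hB hp n
    have h0 : 0 ≤ avg p hp n (fun ω => energy B 0 e₀ ω n) := avg_nonneg fun ω =>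
      add_nonneg (by positivity) (mul_nonneg (by positivity) (residual_nonneg _ _ _))
    simp only [Pi.zero_apply, norm_zero] at h
    simp only [ha, hq]
    norm_num at h
    linarith
  have hdecay : ∀ n : ℕ, ((n : ℝ) + 1) * a n ≤ p * ‖e₀‖ ^ 2 := by
    intro n
    have h := avg_energy_le (B := B) 0 e₀ hκ hB hp (n + 1)
    have h1 : ((n : ℝ) + 1) / p * avg p hp (n + 1) (q n)
        ≤ avg p hp (n + 1) (fun ω => energy B 0 e₀ ω (n + 1)) := by
      rw [← avg_const_mul]
      refine avg_mono fun ω => ?_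
      simp only [energy, Nat.add_sub_cancel, hq]
      push_cast
      exact le_add_of_nonneg_left (by positivity)
    rw [avg_eq_of_dependsOn (hqdep n) n.le_succ] at h1
    simp only [Pi.zero_apply, norm_zero] at h
    norm_num at h
    have h2 : ((n : ℝ) + 1) / p * a n ≤ ‖e₀‖ ^ 2 := h1.trans h
    rw [div_mul_eq_mul_div, div_le_iff₀' hp'] at h2
    exact h2
  set R : ℕ → (ℕ → Fin p) → ℝ := fun n ω => R₀ + ∑ k ∈ Finset.range n, √(q k ω) with hRdef
  have hRdep : ∀ n, DependsOn (R n) (Set.Iio n) := by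
    intro n ω ω' h
    simp only [hRdef]
    congr 1
    refine Finset.sum_congr rfl fun k hk => ?_
    rw [hqdep k fun j (hj : j < k) => h j (hj.trans (Finset.mem_range.1 hk))]
  have hbound : ∀ θ > 0, ∀ N n : ℕ, N ≤ n →
      avg p hp n (fun ω => ‖(heavyBall B 0 e₀ ω n).1‖ ^ 2)
        ≤ θ * (p * ‖e₀‖ ^ 2) + (avg p hp N (fun ω => R N ω ^ 2) / (2 * θ)) / ((n : ℝ) + 1)
          + (∑ k ∈ Finset.Ico N n, a k) / (2 * θ) := by
    intro θ hθ N n hNn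
    have hn : (0 : ℝ) < (n : ℝ) + 1 := by positivity
    have hpt : ∀ ω, ‖(heavyBall B 0 e₀ ω n).1‖ ^ 2
        ≤ θ * ((n : ℝ) + 1) * q n ω + (1 / (2 * θ * ((n : ℝ) + 1))) * R N ω ^ 2
          + (1 / (2 * θ)) * ∑ k ∈ Finset.Ico N n, q k ω := by
      intro ω
      have h1 : ‖(heavyBall B 0 e₀ ω n).1‖ ^ 2 ≤ R n ω * √(q n ω) := by
        rw [← real_inner_self_eq_norm_sq]
        exact (le_abs_self _).trans (abs_inner_heavyBall_le e₀ hR ω n _).1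
      have h2 : R n ω = R N ω + ∑ k ∈ Finset.Ico N n, √(q k ω) := by
        simp only [hRdef, ← Finset.sum_range_add_sum_Ico _ hNn, add_assoc]
      have h3 : (∑ k ∈ Finset.Ico N n, √(q k ω)) ^ 2
          ≤ ((n : ℝ) + 1) * ∑ k ∈ Finset.Ico N n, q k ω := by
        refine sq_sum_le_card_mul_sum_sq.trans ?_
        simp only [Real.sq_sqrt (hq0 _ ω), Nat.card_Ico]
        refine mul_le_mul_of_nonneg_right ?_ (Finset.sum_nonneg fun k _ => hq0 k ω)
        exact_mod_cast (Nat.sub_le n N).trans n.le_succ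
      have h4 : R n ω ^ 2 ≤ 2 * R N ω ^ 2
          + 2 * (((n : ℝ) + 1) * ∑ k ∈ Finset.Ico N n, q k ω) := by
        rw [h2]
        nlinarith [sq_nonneg (R N ω - ∑ k ∈ Finset.Ico N n, √(q k ω))]
      have h5 : R n ω * √(q n ω)
          ≤ θ * ((n : ℝ) + 1) * q n ω + (1 / (4 * θ * ((n : ℝ) + 1))) * R n ω ^ 2 := by
        have hs := Real.sq_sqrt (hq0 n ω)
        have h6 : θ * ((n : ℝ) + 1) * √(q n ω) ^ 2
            + (1 / (4 * θ * ((n : ℝ) + 1))) * R n ω ^ 2 - R n ω * √(q n ω)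
            = (1 / (4 * θ * ((n : ℝ) + 1)))
              * (2 * θ * ((n : ℝ) + 1) * √(q n ω) - R n ω) ^ 2 := by
          field_simp
          ring
        have h7 : 0 ≤ (1 / (4 * θ * ((n : ℝ) + 1)))
              * (2 * θ * ((n : ℝ) + 1) * √(q n ω) - R n ω) ^ 2 := by positivity
        rw [hs] at h6
        linarith
      have h8 := mul_le_mul_of_nonneg_left h4
        (by positivity : 0 ≤ 1 / (4 * θ * ((n : ℝ) + 1)))
      have h9 : 1 / (4 * θ * ((n : ℝ) + 1)) * (2 * R N ω ^ 2
          + 2 * (((n : ℝ) + 1) * ∑ k ∈ Finset.Ico N n, q k ω))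
          = (1 / (2 * θ * ((n : ℝ) + 1))) * R N ω ^ 2
            + (1 / (2 * θ)) * ∑ k ∈ Finset.Ico N n, q k ω := by
        field_simp
        ring
      linarith
    refine (avg_mono hpt).trans ?_
    rw [avg_add, avg_add, avg_const_mul, avg_const_mul, avg_const_mul, avg_sum,
      avg_eq_of_dependsOn (f := fun ω => R N ω ^ 2) (m := N)
        (fun ω ω' h => by simp only [hRdep N h]) hNn,
      Finset.sum_congr rfl fun k hk =>
        avg_eq_of_dependsOn (hp := hp) (hqdep k) (Finset.mem_Ico.1 hk).2.le]
    have h1 := mul_le_mul_of_nonneg_left (hdecay n) hθ.le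
    refine add_le_add (add_le_add ?_ (le_of_eq ?_)) (le_of_eq ?_)
    · linarith
    · field_simp
    · simp only [ha]
      field_simp
  rw [Metric.tendsto_atTop]
  intro ε hε
  set θ := ε / (4 * (p * ‖e₀‖ ^ 2 + 1)) with hθdef
  have hC : 0 < p * ‖e₀‖ ^ 2 + 1 := by positivity
  have hθ : 0 < θ := by positivity
  have hθε : θ * (p * ‖e₀‖ ^ 2) ≤ ε / 4 := by
    have : θ * (p * ‖e₀‖ ^ 2 + 1) = ε / 4 := by
      rw [hθdef]; field_simp
    nlinarith
  obtain ⟨N, hN⟩ : ∃ N, ∑' k, a k - θ * ε / 2 < ∑ k ∈ Finset.range N, a k :=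
    (hsummable.hasSum.tendsto_sum_nat.eventually_const_lt (by
      have : 0 < θ * ε / 2 := by positivity
      linarith)).exists
  have hlim : Tendsto (fun n : ℕ =>
      (avg p hp N (fun ω => R N ω ^ 2) / (2 * θ)) / ((n : ℝ) + 1)) atTop (𝓝 0) :=
    tendsto_const_nhds.div_atTop
      (tendsto_atTop_add_const_right _ _ tendsto_natCast_atTop_atTop)
  obtain ⟨M, hM⟩ := eventually_atTop.1 (hlim.eventually_lt_const (by positivity : 0 < ε / 4))
  refine ⟨max N M, fun n hn => ?_⟩
  have hNn : N ≤ n := (le_max_left _ _).trans hn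
  rw [Real.dist_0_eq_abs, abs_of_nonneg (avg_nonneg fun ω => by positivity)]
  have htail : (∑ k ∈ Finset.Ico N n, a k) / (2 * θ) ≤ ε / 4 := by
    rw [div_le_iff₀ (by positivity), Finset.sum_Ico_eq_sub _ hNn]
    have := hsummable.sum_le_tsum (Finset.range n) fun k _ => ha0 k
    nlinarith
  linarith [hbound θ hθ N n hNn, hM n ((le_max_right _ _).trans hn)]

omit hκ hB

variable (B)

/-- Vectors satisfying a source condition are dense in the orthogonal complement of the common
null space. -/
theorem exists_source_approx (he : ∀ k, (∀ i, B i k = 0) → inner ℝ e₀ k = 0) {ε : ℝ}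
    (hε : 0 < ε) :
    ∃ r : X, ‖e₀ - r‖ < ε ∧ ∃ R₀ : ℝ, ∀ h, |inner ℝ r h| ≤ R₀ * √(residualSq B 0 h) := by
  let U : Submodule ℝ X :=
    { carrier := {r | ∃ R₀ : ℝ, ∀ h, |inner ℝ r h| ≤ R₀ * √(residualSq B 0 h)}
      zero_mem' := ⟨0, fun h => by simp⟩
      add_mem' := by
        rintro r s ⟨C, hC⟩ ⟨D, hD⟩
        refine ⟨C + D, fun h => ?_⟩
        rw [inner_add_left, add_mul]
        exact (abs_add_le _ _).trans (add_le_add (hC h) (hD h))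
      smul_mem' := by
        rintro c r ⟨C, hC⟩
        refine ⟨|c| * C, fun h => ?_⟩
        rw [inner_smul_left, conj_trivial, abs_mul, mul_assoc]
        exact mul_le_mul_of_nonneg_left (hC h) (abs_nonneg c) }
  have hmem : e₀ ∈ Uᗮᗮ := by
    rw [Submodule.mem_orthogonal']
    intro k hk
    refine he k fun i => ?_
    have hU : (B i).adjoint (B i k) ∈ U := by
      refine ⟨‖B i k‖, fun h => ?_⟩
      rw [ContinuousLinearMap.adjoint_inner_left]
      refine (abs_real_inner_le_norm _ _).trans ?_
      gcongr
      exact norm_le_sqrt_residualSq _ _ _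
    have := (Submodule.mem_orthogonal _ _).1 hk _ hU
    rwa [ContinuousLinearMap.adjoint_inner_left, inner_self_eq_zero] at this
  rw [Submodule.orthogonal_orthogonal_eq_closure, ← SetLike.mem_coe,
    Submodule.topologicalClosure_coe, Metric.mem_closure_iff] at hmem
  obtain ⟨r, hr, hd⟩ := hmem ε hε
  exact ⟨r, by rwa [← dist_eq_norm], hr⟩

end HeavyBall

/-- The difference of a minimal norm solution and the reference point is orthogonal to every
direction along which the solution can be moved. -/
theorem inner_eq_zero_of_forall_norm_le {X : Type*} [NormedAddCommGroup X]
    [InnerProductSpace ℝ X] {a k : X} (h : ∀ t : ℝ, ‖a‖ ≤ ‖a + t • k‖) : inner ℝ a k = 0 := by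
  by_contra hne
  have hk : 0 < ‖k‖ ^ 2 := by
    have : k ≠ 0 := by rintro rfl; simp at hne
    positivity
  have h1 := pow_le_pow_left₀ (norm_nonneg a) (h (-(inner ℝ a k / ‖k‖ ^ 2))) 2
  rw [norm_add_sq_real, inner_smul_right, norm_smul, mul_pow, Real.norm_eq_abs, sq_abs] at h1
  have h2 : 0 < inner ℝ a k ^ 2 / ‖k‖ ^ 2 := by positivity
  have h3 : 2 * (-(inner ℝ a k / ‖k‖ ^ 2) * inner ℝ a k)
      + (-(inner ℝ a k / ‖k‖ ^ 2)) ^ 2 * ‖k‖ ^ 2 = -(inner ℝ a k ^ 2 / ‖k‖ ^ 2) := by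
    field_simp
    ring
  linarith

/-- **Theorem SHB:thm4 (regularization property).**  Assume `0 < η i < 1/‖A i‖²` and
let `x†` be the `x₀`-minimal norm solution of `A x = y`.  For each noise level `δ > 0`
let `y^δ` be noisy data with `‖y^δ i − y i‖ ≤ δ_i` and total noise level
`δ = (∑ δ_i²)^{1/2}`, let `x^δ` be the corresponding stochastic heavy-ball iterates,
and let the stopping index `n_δ` satisfy `n_δ → ∞` and `δ² n_δ → 0` as `δ → 0`.
Then `E[‖x^δ_{n_δ} − x†‖²] → 0` as `δ → 0`. -/
theorem stmt_15 {p : ℕ} (hp : 0 < p) {X : Type*} [NormedAddCommGroup X]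
    [InnerProductSpace ℝ X] [CompleteSpace X]
    {Y : Fin p → Type*} [∀ i, NormedAddCommGroup (Y i)] [∀ i, InnerProductSpace ℝ (Y i)]
    [∀ i, CompleteSpace (Y i)]
    (A : ∀ i, X →L[ℝ] Y i) (y : ∀ i, Y i)
    (η : Fin p → ℝ) (hη : ∀ i, 0 < η i ∧ η i < 1 / ‖A i‖ ^ 2)
    (x₀ xdag : X)
    (hdag : ∀ i, (A i) xdag = y i)
    (hmin : ∀ x' : X, (∀ i, (A i) x' = y i) → ‖xdag - x₀‖ ≤ ‖x' - x₀‖)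
    -- the family of noisy data, indexed by the total noise level `δ`
    (yδ : ℝ → ∀ i, Y i) (δi : ℝ → Fin p → ℝ)
    (hnoise : ∀ δ > (0 : ℝ), ∀ i, ‖yδ δ i - y i‖ ≤ δi δ i)
    (hlevel : ∀ δ > (0 : ℝ), δ = Real.sqrt (∑ i, (δi δ i) ^ 2))
    -- the corresponding stochastic heavy-ball iterates
    (xδ : ℝ → (ℕ → Fin p) → ℕ → X)
    (hxδ0 : ∀ δ ω, xδ δ ω 0 = x₀)
    (hxδ : ∀ δ ω, ∀ n : ℕ, xδ δ ω (n + 1) = xδ δ ω n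
      - (((n : ℝ) + 2)⁻¹ * η (ω n)) •
          ((A (ω n)).adjoint ((A (ω n)) (xδ δ ω n) - yδ δ (ω n)))
      + ((n : ℝ) / ((n : ℝ) + 2)) • (xδ δ ω n - xδ δ ω (n - 1)))
    -- the stopping index: `n_δ → ∞` and `δ² n_δ → 0` as `δ → 0`
    (nδ : ℝ → ℕ)
    (hn1 : Tendsto nδ (𝓝[>] (0 : ℝ)) atTop)
    (hn2 : Tendsto (fun δ => δ ^ 2 * (nδ δ : ℝ)) (𝓝[>] (0 : ℝ)) (𝓝 0)) :
    Tendsto (fun δ => avg p hp (nδ δ) (fun ω => ‖xδ δ ω (nδ δ) - xdag‖ ^ 2))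
      (𝓝[>] (0 : ℝ)) (𝓝 0) := by
  have hp' : (0 : ℝ) < p := by positivity
  have : Nonempty (Fin p) := ⟨⟨0, hp⟩⟩
  set B : ∀ i, X →L[ℝ] Y i := fun i => √(η i) • A i with hBdef
  have hBnorm : ∀ i, ‖B i‖ ^ 2 < 1 := by
    intro i
    have hA : 0 < ‖A i‖ ^ 2 := one_div_pos.1 ((hη i).1.trans (hη i).2)
    rw [hBdef, norm_smul, mul_pow, Real.norm_of_nonneg (Real.sqrt_nonneg _),
      Real.sq_sqrt (hη i).1.le]
    exact (lt_div_iff₀ hA).1 (hη i).2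
  obtain ⟨κ, hκ, hB⟩ : ∃ κ > 0, ∀ i, ‖B i‖ ^ 2 ≤ 1 - 2 * κ := by
    obtain ⟨j, hj⟩ := Finite.exists_max fun i => ‖B i‖ ^ 2
    exact ⟨(1 - ‖B j‖ ^ 2) / 2, by linarith [hBnorm j], fun i => by linarith [hj i]⟩
  set ξ : ℝ → ∀ i, Y i := fun δ i => √(η i) • (yδ δ i - y i) with hξdef
  have hgrad : ∀ δ i x, η i • (A i).adjoint (A i x - yδ δ i)
      = residualGradient B (ξ δ) (x - xdag) i := by
    intro δ i x
    unfold residualGradient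
    have : B i (x - xdag) - ξ δ i = √(η i) • (A i x - yδ δ i) := by
      simp only [hBdef, hξdef, smul_apply, map_sub, hdag]
      module
    rw [this]
    simp only [hBdef, map_smulₛₗ, smul_apply, smul_smul, conj_trivial, RingHom.id_apply,
      Real.mul_self_sqrt (hη i).1.le]
  have hiter : ∀ δ ω n, xδ δ ω n - xdag = (heavyBall B (ξ δ) (x₀ - xdag) ω n).1 ∧
      xδ δ ω (n - 1) - xdag = (heavyBall B (ξ δ) (x₀ - xdag) ω (n - 1)).1 := by
    intro δ ω n
    induction n with
    | zero => simp [hxδ0, heavyBall]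
    | succ n ih =>
      refine ⟨?_, ih.1⟩
      have hn : (n : ℝ) + 2 ≠ 0 := by positivity
      simp only [heavyBall]
      rw [heavyBall_snd_eq, ← ih.1, ← ih.2, ← hgrad, hxδ]
      match_scalars <;> field_simp <;> ring
  have horth : ∀ k, (∀ i, B i k = 0) → inner ℝ (x₀ - xdag) k = 0 := by
    intro k hk
    rw [← neg_sub, inner_neg_left, neg_eq_zero]
    refine inner_eq_zero_of_forall_norm_le fun t => ?_
    have hAk : ∀ i, A i k = 0 := fun i =>
      (smul_eq_zero.1 (hk i)).resolve_left (Real.sqrt_pos.2 (hη i).1).ne'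
    have := hmin (xdag + t • k) fun i => by simp [hdag, hAk]
    rwa [add_sub_right_comm] at this
  have hξsum : ∀ δ > 0, ∑ i, ‖ξ δ i‖ ^ 2 ≤ (∑ i, η i) * δ ^ 2 := by
    intro δ hδ
    have hδ2 : δ ^ 2 = ∑ i, δi δ i ^ 2 := by
      conv_lhs => rw [hlevel δ hδ]
      exact Real.sq_sqrt (Finset.sum_nonneg fun _ _ => sq_nonneg _)
    rw [hδ2, Finset.mul_sum]
    refine Finset.sum_le_sum fun i _ => ?_
    simp only [hξdef]
    rw [norm_smul, mul_pow, Real.norm_of_nonneg (Real.sqrt_nonneg _), Real.sq_sqrt (hη i).1.le]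
    have := hnoise δ hδ i
    gcongr
    · exact Finset.sum_nonneg fun j _ => (hη j).1.le
    · exact Finset.single_le_sum (fun j _ => (hη j).1.le) (Finset.mem_univ i)
  rw [Metric.tendsto_nhds]
  intro ε hε
  obtain ⟨r, hr, R₀, hR⟩ := exists_source_approx B (x₀ - xdag) horth
    (Real.sqrt_pos.2 (by positivity : 0 < ε / 8))
  have hs : ‖x₀ - xdag - r‖ ^ 2 ≤ ε / 8 := by
    rw [← Real.sq_sqrt (by positivity : 0 ≤ ε / 8)]
    gcongr
  have hlim₁ := (tendsto_avg_norm_sq r hκ hB hp hR).comp hn1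
  have hlim₂ := hn2.const_mul (κ⁻¹ / p * ∑ i, η i)
  rw [mul_zero] at hlim₂
  filter_upwards [hlim₁.eventually_lt_const (by positivity : 0 < ε / 8),
    hlim₂.eventually_lt_const (by positivity : 0 < ε / 8), self_mem_nhdsWithin] with δ h₁ h₂ hδ
  have hδ : 0 < δ := hδ
  rw [Real.dist_0_eq_abs, abs_of_nonneg (avg_nonneg fun ω => by positivity)]
  have hpt : ∀ ω, ‖xδ δ ω (nδ δ) - xdag‖ ^ 2 ≤ 2 * ‖(heavyBall B 0 r ω (nδ δ)).1‖ ^ 2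
      + 2 * ‖(heavyBall B (ξ δ) (x₀ - xdag - r) ω (nδ δ)).1‖ ^ 2 := by
    intro ω
    have hsplit := heavyBall_add B (ξ δ) r (x₀ - xdag - r) ω (nδ δ)
    rw [add_sub_cancel] at hsplit
    rw [(hiter δ ω _).1, hsplit, Prod.fst_add]
    set u := (heavyBall B 0 r ω (nδ δ)).1
    set v := (heavyBall B (ξ δ) (x₀ - xdag - r) ω (nδ δ)).1
    have := parallelogram_law_with_norm ℝ u v
    nlinarith [sq_nonneg ‖u - v‖]
  have hmain := avg_mono (hp := hp) (m := nδ δ) hpt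
  rw [avg_add, avg_const_mul, avg_const_mul] at hmain
  have hstab := avg_norm_sq_le (ξ δ) (x₀ - xdag - r) hκ hB hp (nδ δ)
  have hnoise' : (nδ δ : ℝ) * (κ⁻¹ / p * ∑ i, ‖ξ δ i‖ ^ 2)
      ≤ κ⁻¹ / p * (∑ i, η i) * (δ ^ 2 * (nδ δ : ℝ)) := by
    calc (nδ δ : ℝ) * (κ⁻¹ / p * ∑ i, ‖ξ δ i‖ ^ 2)
        ≤ (nδ δ : ℝ) * (κ⁻¹ / p * ((∑ i, η i) * δ ^ 2)) := by
          gcongr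
          exact hξsum δ hδ
      _ = _ := by ring
  simp only [Function.comp_apply] at h₁
  linarith
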